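/- Let J be the ideal of ℂ[x_1,x_2,x_3] generated by { x_1², x_1x_2, x_2², x_1x_3 − (1/2)x_1 − (1/2)x_2, x_2x_3 − (1/2)x_1 − (1/2)x_2, x_3² − x_3 }. Then for every constant a ∈ ℂ and every polynomial g ∈ ℂ[x_1,x_2], the product (x_1 − a)·(x_3 − g) does not belong to J. In particular, although x_1x_3 is a minimal generator of the leading-monomial ideal T(J) for the lexicographical order induced by x_1 < x_2 < x_3, no element of a minimal lexicographical Gröbner basis of J with leading monomial x_1x_3 admits a factorization into factors of the form x_m − g_m with g_m ∈ ℂ[x_1,…,x_{m−1}]; thus the Axis of Evil factorization can fail for zero-dimensional ideals that are not radical. -/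

import Mathlib

/-!  STATEMENT 14.
For the (zero-dimensional, non-radical) ideal
`J = (x_1², x_1x_2, x_2², x_1x_3 − ½x_1 − ½x_2, x_2x_3 − ½x_1 − ½x_2, x_3² − x_3)`
of `ℂ[x_1,x_2,x_3]`, no product `(x_1 − a)(x_3 − g)` with `a ∈ ℂ` and
`g ∈ ℂ[x_1,x_2]` belongs to `J`, although `x_1x_3` is a minimal generator of the
leading-monomial ideal `T(J)` for the lex order induced by `x_1 < x_2 < x_3`:
the Axis of Evil factorization can fail for non-radical zero-dimensional ideals. -/

open MvPolynomial

/-- Lexicographical order induced by `x_1 < x_2 < x_3` on exponent vectors. -/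
def lexLt (a b : Fin 3 →₀ ℕ) : Prop :=
  ∃ j : Fin 3, a j < b j ∧ ∀ i : Fin 3, j < i → a i = b i

/-- `m` is the lex-leading monomial (exponent vector) of `f`. -/
def IsLeadMon (f : MvPolynomial (Fin 3) ℂ) (m : Fin 3 →₀ ℕ) : Prop :=
  m ∈ f.support ∧ ∀ e ∈ f.support, e ≠ m → lexLt e m

/-- `T(J)`: the set of lex-leading monomials of nonzero elements of `J`. -/
def LTset (J : Ideal (MvPolynomial (Fin 3) ℂ)) : Set (Fin 3 →₀ ℕ) :=
  {m | ∃ f ∈ J, f ≠ 0 ∧ IsLeadMon f m}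

/-- Minimal monomial generating set of a semigroup ideal of monomials:
its divisibility-minimal elements. -/
def minBasis (S : Set (Fin 3 →₀ ℕ)) : Set (Fin 3 →₀ ℕ) :=
  {m ∈ S | ∀ m' ∈ S, (∃ u, m = m' + u) → m' = m}

/-!
The ideal describes two double points on the `x_3`-axis: the point `(0, 0, 1)` with tangent
direction `(1, 1, 0)` and the origin with tangent direction `(1, -1, 0)`. Evaluation in the dual
numbers at these two tangent vectors kills the ideal. A polynomial in `x_1, x_2` takes the same
value at both points, namely its constant term; this rules out `x_3` as a leading monomial. If
`(x_1 - a)(x_3 - g)` vanishes at both points, then `a = 0`; the derivatives of `x_1 (x_3 - g)` along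
the two tangent vectors are then nonzero multiples of `1 - g(0)` and `-g(0)`, which cannot both
vanish.

The same argument works over every commutative ring with `(½, ½)` replaced by any `(c, d)` such
that `c + d = 1` and `d ≠ 0`; the tangent direction at the origin is then `(d, -c, 0)`.
-/

open Finsupp (single)

open scoped DualNumber

section General

variable {σ R : Type*} [CommSemiring R]

theorem mem_supported_compl_singleton_iff {i : σ} {f : MvPolynomial σ R} :
    f ∈ supported R {i}ᶜ ↔ ∀ m ∈ f.support, m i = 0 := by
  simp only [mem_supported, Set.subset_compl_singleton_iff, Finset.mem_coe,
    mem_vars_iff_mem_support, Finsupp.mem_support_iff, not_exists, not_and, not_not]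

theorem eq_C_add_C_mul_X_of_support_subset [DecidableEq σ] {i : σ} {f : MvPolynomial σ R}
    (hf : f.support ⊆ {0, single i 1}) :
    f = C (coeff 0 f) + C (coeff (single i 1) f) * X i := by
  have h : (0 : σ →₀ ℕ) ≠ single i 1 := by simp [eq_comm]
  conv_lhs => rw [f.as_sum, Finset.sum_subset hf fun m _ hm => by simp [notMem_support_iff.1 hm]]
  rw [Finset.sum_pair h, C_mul_X_eq_monomial, C_apply]

theorem exists_eq_single_of_le_single {i : σ} {n : ℕ} {m : σ →₀ ℕ} (hm : m ≤ single i n) :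
    ∃ k ≤ n, m = single i k := by
  refine ⟨m i, by simpa using hm i, Finsupp.ext fun x => ?_⟩
  rcases eq_or_ne i x with rfl | hx
  · simp
  · simpa [hx] using hm x

theorem eq_single_of_le_single_add_single {i j : σ} {m : σ →₀ ℕ}
    (hm : m ≤ single i 1 + single j 1) :
    (∃ k ≤ 1, m = single i k) ∨ m = single j 1 ∨ m = single i 1 + single j 1 := by
  by_cases hj : m j = 0
  · refine .inl (exists_eq_single_of_le_single fun x => ?_)
    rcases eq_or_ne j x with rfl | hx
    · simp [hj]
    · simpa [hx] using hm x
  · have hle : single j 1 ≤ m := Finsupp.single_le_iff.2 (Nat.one_le_iff_ne_zero.2 hj)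
    obtain ⟨k, hk, hmk⟩ := exists_eq_single_of_le_single (tsub_le_iff_right.2 hm)
    rw [tsub_eq_iff_eq_add_of_le hle] at hmk
    interval_cases k
    · exact .inr (.inl (by simpa using hmk))
    · exact .inr (.inr hmk)

end General

section Lex

theorem lexLt_of_apply_two_lt {a b : Fin 3 →₀ ℕ} (h : a 2 < b 2) : lexLt a b :=
  ⟨2, h, fun i hi => absurd (Fin.le_last i) hi.not_ge⟩

theorem lexLt.apply_lt_of_single {a : Fin 3 →₀ ℕ} {i : Fin 3} {n : ℕ} (h : lexLt a (single i n)) :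
    a i < n ∧ ∀ k, i < k → a k = 0 := by
  obtain ⟨j, hj, heq⟩ := h
  obtain rfl : i = j := by
    by_contra hij
    simp [hij] at hj
  exact ⟨by simpa using hj, fun k hk => by simpa [hk.ne] using heq k hk⟩

theorem lexLt.exists_eq_single_zero {a : Fin 3 →₀ ℕ} {n : ℕ} (h : lexLt a (single 0 n)) :
    ∃ k < n, a = single 0 k := by
  obtain ⟨hlt, hzero⟩ := h.apply_lt_of_single
  refine ⟨a 0, hlt, Finsupp.ext fun i => ?_⟩
  rcases eq_or_ne i 0 with rfl | hi
  · simp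
  · simpa [hi.symm] using hzero i (Fin.pos_of_ne_zero hi)

variable {R : Type*} [CommSemiring R]

/-- `m` is the lex-leading exponent of `f`; this is `IsLeadMon` over an arbitrary commutative
semiring. -/
def IsLeadingExponent (f : MvPolynomial (Fin 3) R) (m : Fin 3 →₀ ℕ) : Prop :=
  m ∈ f.support ∧ ∀ e ∈ f.support, e ≠ m → lexLt e m

/-- The set `T(J)` over an arbitrary commutative semiring, stated so that it unfolds to `LTset J`
over `ℂ`. -/
def leadingExponents (J : Ideal (MvPolynomial (Fin 3) R)) : Set (Fin 3 →₀ ℕ) :=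
  {m | ∃ f ∈ J, f ≠ 0 ∧ IsLeadingExponent f m}

theorem isLeadingExponent_monomial_add {m : Fin 3 →₀ ℕ} {r : R} {g : MvPolynomial (Fin 3) R}
    (hr : r ≠ 0) (hm : 0 < m 2) (hg : g ∈ supported R {2}ᶜ) :
    IsLeadingExponent (monomial m r + g) m := by
  rw [mem_supported_compl_singleton_iff] at hg
  have hmg : m ∉ g.support := fun h => hm.ne' (hg m h)
  refine ⟨by simpa [notMem_support_iff.1 hmg] using hr, fun e he hem => lexLt_of_apply_two_lt ?_⟩
  have heg : e ∈ g.support := by simpa [coeff_monomial, hem.symm] using he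
  rwa [hg e heg]

theorem IsLeadingExponent.exists_eq_single_zero {f : MvPolynomial (Fin 3) R} {n : ℕ}
    (hf : IsLeadingExponent f (single 0 n)) {e : Fin 3 →₀ ℕ} (he : e ∈ f.support) :
    ∃ k ≤ n, e = single 0 k := by
  rcases eq_or_ne e (single 0 n) with heq | hne
  · exact ⟨n, le_rfl, heq⟩
  · obtain ⟨k, hk, heq⟩ := (hf.2 e he hne).exists_eq_single_zero
    exact ⟨k, hk.le, heq⟩

theorem IsLeadingExponent.sub_C_mul_X_two_mem_supported {R : Type*} [CommRing R]
    {f : MvPolynomial (Fin 3) R} (hf : IsLeadingExponent f (single 2 1)) :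
    f - C (coeff (single 2 1) f) * X 2 ∈ supported R {2}ᶜ := by
  rw [mem_supported_compl_singleton_iff]
  intro e he
  rw [C_mul_X_eq_monomial] at he
  have hne : e ≠ single 2 1 := by
    rintro rfl
    simp at he
  have hef : e ∈ f.support := by simpa [coeff_monomial, hne.symm] using he
  exact Nat.lt_one_iff.1 (hf.2 e hef hne).apply_lt_of_single.1

end Lex

section TangentEval

variable {R : Type*} [CommSemiring R] {u v t : R} {g : MvPolynomial (Fin 3) R}

/-- Evaluation in the dual numbers at the tangent vector `(u, v, 0)` based at `(0, 0, t)`: the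
first component is the value at the point, the second one the derivative along the vector. -/
noncomputable def tangentEval (u v t : R) : MvPolynomial (Fin 3) R →ₐ[R] R[ε] :=
  aeval ![TrivSqZeroExt.inr u, TrivSqZeroExt.inr v, TrivSqZeroExt.inl t]

@[simp]
theorem tangentEval_X_zero : tangentEval u v t (X 0) = TrivSqZeroExt.inr u := by
  simp [tangentEval]

@[simp]
theorem tangentEval_X_one : tangentEval u v t (X 1) = TrivSqZeroExt.inr v := by
  simp [tangentEval]

@[simp]
theorem tangentEval_X_two : tangentEval u v t (X 2) = TrivSqZeroExt.inl t := by
  simp [tangentEval]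

theorem fst_tangentEval_of_mem_supported (hg : g ∈ supported R {2}ᶜ) :
    (tangentEval u v t g).fst = constantCoeff g := by
  have hvars : ∀ i ∈ g.vars, (![0, 0, t] : Fin 3 → R) i = 0 := by
    intro i hi
    have hi2 : i ≠ 2 := mem_supported.1 hg hi
    fin_cases i <;> simp_all
  have hpoint : (TrivSqZeroExt.fstHom R R R).comp (tangentEval u v t) = aeval ![0, 0, t] := by
    ext i
    fin_cases i <;> simp [tangentEval]
  calc (tangentEval u v t g).fst
    _ = aeval ![0, 0, t] g := DFunLike.congr_fun hpoint g
    _ = constantCoeff g := aeval_eq_constantCoeff_of_vars hvars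

end TangentEval

section DoublePoints

variable {R : Type*} [CommRing R] {c d : R} {f g : MvPolynomial (Fin 3) R}

/-- The ideal of the counterexample, with general coefficients `c`, `d` in place of `½`, `½`.
For `c + d = 1` and `d ≠ 0` it describes two double points on the `x_3`-axis. -/
noncomputable def doublePointsIdeal (c d : R) : Ideal (MvPolynomial (Fin 3) R) :=
  Ideal.span
    { X 0 ^ 2, X 0 * X 1, X 1 ^ 2,
      X 0 * X 2 - C c * X 0 - C d * X 1,
      X 1 * X 2 - C c * X 0 - C d * X 1,
      X 2 ^ 2 - X 2 }

theorem tangentEval_eq_zero_of_mem {u v t : R} (ht : t ^ 2 = t) (hu : u * t = u * c + v * d)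
    (hv : v * t = u * c + v * d) (hf : f ∈ doublePointsIdeal c d) : tangentEval u v t f = 0 := by
  suffices h : doublePointsIdeal c d ≤ RingHom.ker (tangentEval u v t) from h hf
  rw [doublePointsIdeal, Ideal.span_le]
  rintro q (rfl | rfl | rfl | rfl | rfl | rfl) <;>
    rw [SetLike.mem_coe, RingHom.mem_ker] <;>
    ext <;> simp [TrivSqZeroExt.algebraMap_eq_inl, ← pow_two, sub_sub, ht, hu, hv]

theorem tangentEval_one_eq_zero_of_mem (hcd : c + d = 1) (hf : f ∈ doublePointsIdeal c d) :
    tangentEval 1 1 1 f = 0 :=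
  tangentEval_eq_zero_of_mem (by ring) (by linear_combination -hcd) (by linear_combination -hcd) hf

theorem tangentEval_zero_eq_zero_of_mem (hf : f ∈ doublePointsIdeal c d) :
    tangentEval d (-c) 0 f = 0 :=
  tangentEval_eq_zero_of_mem (by ring) (by ring) (by ring) hf

theorem single_add_single_mem_leadingExponents [Nontrivial R] :
    single 0 1 + single 2 1 ∈ leadingExponents (doublePointsIdeal c d) := by
  have hmon : (X 0 * X 2 : MvPolynomial (Fin 3) R) = monomial (single 0 1 + single 2 1) 1 := by
    simp [X, monomial_mul]
  have hX {i : Fin 3} (hi : i ≠ 2) (r : R) : C r * X i ∈ supported R {(2 : Fin 3)}ᶜ :=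
    mul_mem (Subalgebra.algebraMap_mem _ r) (X_mem_supported.2 hi)
  have hlead : IsLeadingExponent (X 0 * X 2 - C c * X 0 - C d * X 1) (single 0 1 + single 2 1) := by
    rw [sub_sub, sub_eq_add_neg, hmon]
    exact isLeadingExponent_monomial_add one_ne_zero (by simp)
      (neg_mem (add_mem (hX (by decide) c) (hX (by decide) d)))
  exact ⟨_, Ideal.subset_span (by simp), support_nonempty.1 ⟨_, hlead.1⟩, hlead⟩

theorem single_zero_notMem_leadingExponents (hcd : c + d = 1) {k : ℕ} (hk : k ≤ 1) :
    single 0 k ∉ leadingExponents (doublePointsIdeal c d) := by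
  rintro ⟨f, hfJ, hf0, hlead⟩
  have hsupp : f.support ⊆ {0, single 0 1} := by
    intro e he
    obtain ⟨l, hl, rfl⟩ := hlead.exists_eq_single_zero he
    have hl1 : l ≤ 1 := hl.trans hk
    interval_cases l <;> simp
  have hf := eq_C_add_C_mul_X_of_support_subset hsupp
  have heval := tangentEval_one_eq_zero_of_mem hcd hfJ
  rw [hf] at heval
  have hconst : coeff 0 f = 0 := by
    simpa [TrivSqZeroExt.algebraMap_eq_inl] using congrArg TrivSqZeroExt.fst heval
  have hlin : coeff (single 0 1) f = 0 := by
    simpa [TrivSqZeroExt.algebraMap_eq_inl] using congrArg TrivSqZeroExt.snd heval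
  exact hf0 (by rw [hf, hconst, hlin]; simp)

theorem single_two_notMem_leadingExponents (hcd : c + d = 1) :
    single 2 1 ∉ leadingExponents (doublePointsIdeal c d) := by
  rintro ⟨f, hfJ, -, hlead⟩
  set r := coeff (single 2 1) f
  have hrest := hlead.sub_C_mul_X_two_mem_supported
  have hconst_one : -r = constantCoeff (f - C r * X 2) := by
    simpa [TrivSqZeroExt.algebraMap_eq_inl, tangentEval_one_eq_zero_of_mem hcd hfJ] using
      fst_tangentEval_of_mem_supported (u := 1) (v := 1) (t := 1) hrest
  have hconst_zero : 0 = constantCoeff (f - C r * X 2) := by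
    simpa [TrivSqZeroExt.algebraMap_eq_inl, tangentEval_zero_eq_zero_of_mem hfJ] using
      fst_tangentEval_of_mem_supported (u := d) (v := -c) (t := 0) hrest
  exact mem_support_iff.1 hlead.1 (neg_eq_zero.1 (hconst_one.trans hconst_zero.symm))

theorem single_add_single_mem_minBasis [Nontrivial R] (hcd : c + d = 1) :
    single 0 1 + single 2 1 ∈ minBasis (leadingExponents (doublePointsIdeal c d)) := by
  refine ⟨single_add_single_mem_leadingExponents, ?_⟩
  rintro m hm ⟨w, hw⟩
  have hle : m ≤ single 0 1 + single 2 1 := hw ▸ le_self_add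
  rcases eq_single_of_le_single_add_single hle with ⟨k, hk, rfl⟩ | rfl | rfl
  · exact absurd hm (single_zero_notMem_leadingExponents hcd hk)
  · exact absurd hm (single_two_notMem_leadingExponents hcd)
  · rfl

theorem X_sub_C_mul_X_sub_notMem_doublePointsIdeal (hcd : c + d = 1) (hd : d ≠ 0) (a : R)
    (hg : g ∈ supported R {2}ᶜ) : (X 0 - C a) * (X 2 - g) ∉ doublePointsIdeal c d := by
  intro hmem
  have hone := tangentEval_one_eq_zero_of_mem hcd hmem
  have hzero := tangentEval_zero_eq_zero_of_mem hmem
  have hvalue_one : a * (1 - constantCoeff g) = 0 := by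
    simpa [TrivSqZeroExt.algebraMap_eq_inl, fst_tangentEval_of_mem_supported hg] using
      congrArg TrivSqZeroExt.fst hone
  have hvalue_zero : a * constantCoeff g = 0 := by
    simpa [TrivSqZeroExt.algebraMap_eq_inl, fst_tangentEval_of_mem_supported hg] using
      congrArg TrivSqZeroExt.fst hzero
  obtain rfl : a = 0 := by linear_combination hvalue_one + hvalue_zero
  have hderiv_one : 1 - constantCoeff g = 0 := by
    simpa [fst_tangentEval_of_mem_supported hg] using congrArg TrivSqZeroExt.snd hone
  have hderiv_zero : d * constantCoeff g = 0 := by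
    simpa [fst_tangentEval_of_mem_supported hg] using congrArg TrivSqZeroExt.snd hzero
  exact hd (by linear_combination d * hderiv_one + hderiv_zero)

theorem axis_of_evil_fails_non_radical_general (hcd : c + d = 1) (hd : d ≠ 0) :
    single 0 1 + single 2 1 ∈ minBasis (leadingExponents (doublePointsIdeal c d)) ∧
      ∀ (a : R) (g : MvPolynomial (Fin 3) R), (∀ m ∈ g.support, m 2 = 0) →
        (X 0 - C a) * (X 2 - g) ∉ doublePointsIdeal c d :=
  have : Nontrivial R := ⟨d, 0, hd⟩
  ⟨single_add_single_mem_minBasis hcd, fun a _ hg =>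
    X_sub_C_mul_X_sub_notMem_doublePointsIdeal hcd hd a (mem_supported_compl_singleton_iff.2 hg)⟩

end DoublePoints

theorem axis_of_evil_fails_non_radical
    (J : Ideal (MvPolynomial (Fin 3) ℂ))
    (hJ : J = Ideal.span
      { X 0 ^ 2, X 0 * X 1, X 1 ^ 2,
        X 0 * X 2 - C (1 / 2 : ℂ) * X 0 - C (1 / 2 : ℂ) * X 1,
        X 1 * X 2 - C (1 / 2 : ℂ) * X 0 - C (1 / 2 : ℂ) * X 1,
        X 2 ^ 2 - X 2 }) :
    -- `x_1x_3` is a minimal generator of `T(J)` …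
    (Finsupp.single (0 : Fin 3) 1 + Finsupp.single (2 : Fin 3) 1)
      ∈ minBasis (LTset J) ∧
    -- … but no product `(x_1 − a)(x_3 − g)` with `g ∈ ℂ[x_1,x_2]` lies in `J`
    (∀ (a : ℂ) (g : MvPolynomial (Fin 3) ℂ), (∀ m ∈ g.support, m 2 = 0) →
      (X 0 - C a) * (X 2 - g) ∉ J) := by
  subst hJ
  exact axis_of_evil_fails_non_radical_general (by norm_num) (by norm_num)
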